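/- Let L be an n-dimensional Lie algebra over a field F of nilpotency class 3 with dim [L,L] = 2. Then L is capable if and only if L is isomorphic to the direct sum of L_{4,3} and an (n−4)-dimensional abelian Lie algebra, or to the direct sum of L_{5,5} and an (n−5)-dimensional abelian Lie algebra. -/

import Mathlib

open Module

universe u

/-- A witness to the capability of a Lie algebra `L` over `F`: a Lie algebra `E`
together with an isomorphism `L ≃ E ⧸ Z(E)`. -/
structure CapableWitness (F : Type u) (L : Type u) [Field F] [LieRing L] [LieAlgebra F L] where
  carrier : Type u
  [lieRing : LieRing carrier]
  [lieAlgebra : LieAlgebra F carrier]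
  equiv : L ≃ₗ⁅F⁆ (carrier ⧸ LieAlgebra.center F carrier)

/-- A Lie algebra `L` over a field `F` is capable if there exists a Lie algebra `E` over `F`
with `L ≅ E ⧸ Z(E)`. -/
def IsCapable (F : Type u) (L : Type u) [Field F] [LieRing L] [LieAlgebra F L] : Prop :=
  Nonempty (CapableWitness F L)

/-- `L` is isomorphic to `L_{4,3} ⊕ A(n-4)` (dimension `n`). -/
def IsL43SumAbelian (F : Type u) (L : Type u) [Field F] [LieRing L] [LieAlgebra F L]
    (n : ℕ) : Prop :=
  ∃ (hn : 4 ≤ n) (b : Basis (Fin n) F L),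
    ⁅b ⟨0, by omega⟩, b ⟨1, by omega⟩⁆ = b ⟨2, by omega⟩ ∧
    ⁅b ⟨0, by omega⟩, b ⟨2, by omega⟩⁆ = b ⟨3, by omega⟩ ∧
    ∀ i j : Fin n, i < j → (i, j) ≠ (⟨0, by omega⟩, ⟨1, by omega⟩) →
      (i, j) ≠ (⟨0, by omega⟩, ⟨2, by omega⟩) →
      ⁅b i, b j⁆ = 0

/-- `L` is isomorphic to `L_{5,5} ⊕ A(n-5)` (dimension `n`). -/
def IsL55SumAbelian (F : Type u) (L : Type u) [Field F] [LieRing L] [LieAlgebra F L]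
    (n : ℕ) : Prop :=
  ∃ (hn : 5 ≤ n) (b : Basis (Fin n) F L),
    ⁅b ⟨0, by omega⟩, b ⟨1, by omega⟩⁆ = b ⟨2, by omega⟩ ∧
    ⁅b ⟨0, by omega⟩, b ⟨2, by omega⟩⁆ = b ⟨4, by omega⟩ ∧
    ⁅b ⟨1, by omega⟩, b ⟨3, by omega⟩⁆ = b ⟨4, by omega⟩ ∧
    ∀ i j : Fin n, i < j → (i, j) ≠ (⟨0, by omega⟩, ⟨1, by omega⟩) →
      (i, j) ≠ (⟨0, by omega⟩, ⟨2, by omega⟩) →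
      (i, j) ≠ (⟨1, by omega⟩, ⟨3, by omega⟩) →
      ⁅b i, b j⁆ = 0

section Helpers

variable {F L : Type u} [Field F] [LieRing L] [LieAlgebra F L]

/-- Structure of class 3 Lie algebras with two-dimensional derived subalgebra. -/
lemma struct_aux [FiniteDimensional F L]
    (h2 : LieModule.lowerCentralSeries F L L 2 ≠ ⊥)
    (h3 : LieModule.lowerCentralSeries F L L 3 = ⊥)
    (hder : finrank F ↥(LieModule.lowerCentralSeries F L L 1) = 2) :
    ∃ (x1 x2 w z : L) (lam mu g : L →ₗ[F] F),
      ⁅x1, x2⁆ = w ∧ (∀ x : L, ⁅x, w⁆ = lam x • z) ∧ (∀ x : L, ⁅x, z⁆ = 0) ∧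
      (∀ x y : L, ⁅x, y⁆ = (lam x * mu y - lam y * mu x) • w + g ⁅x, y⁆ • z) ∧
      lam x1 = 1 ∧ mu x1 = 0 ∧ lam x2 = 0 ∧ mu x2 = 1 ∧
      lam w = 0 ∧ lam z = 0 ∧ mu w = 0 ∧ mu z = 0 ∧ g w = 0 ∧ g z = 1 := by
  have hmem : ∀ (k : ℕ) (x m : L), m ∈ LieModule.lowerCentralSeries F L L k →
      ⁅x, m⁆ ∈ LieModule.lowerCentralSeries F L L (k+1) := by
    intro k x m hm
    rw [LieModule.lowerCentralSeries_succ]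
    exact LieSubmodule.lie_mem_lie (LieSubmodule.mem_top x) hm
  have hmem1 : ∀ x y : L, ⁅x, y⁆ ∈ LieModule.lowerCentralSeries F L L 1 := by
    intro x y
    exact hmem 0 x y (by simp)
  obtain ⟨x1, w0, hw0, hz0⟩ : ∃ x1 w0 : L, w0 ∈ LieModule.lowerCentralSeries F L L 1 ∧
      ⁅x1, w0⁆ ≠ 0 := by
    by_contra! hcon
    apply h2
    rw [LieModule.lowerCentralSeries_succ, eq_bot_iff, LieSubmodule.lieIdeal_oper_eq_span,
      LieSubmodule.lieSpan_le]
    rintro _ ⟨x, m, rfl⟩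
    simpa using hcon x m m.2
  obtain ⟨z, hz⟩ : ∃ z, z = ⁅x1, w0⁆ := ⟨_, rfl⟩
  rw [← hz] at hz0
  have hz2 : z ∈ LieModule.lowerCentralSeries F L L 2 := hz ▸ hmem 1 x1 w0 hw0
  have hz1 : z ∈ LieModule.lowerCentralSeries F L L 1 := hz ▸ hmem1 _ _
  have h3' : ∀ x m : L, m ∈ LieModule.lowerCentralSeries F L L 2 → ⁅x, m⁆ = 0 := by
    intro x m hm
    have := hmem 2 x m hm
    rw [h3] at this
    simpa using this
  have hzc : ∀ x : L, ⁅x, z⁆ = 0 := fun x => h3' x z hz2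
  have hli : LinearIndependent F ![w0, z] := by
    rw [LinearIndependent.pair_iff]
    intro s t hst
    have h := congrArg (fun v => ⁅x1, v⁆) hst
    simp only [lie_add, lie_smul, hzc, ← hz, smul_zero, add_zero, lie_zero] at h
    have hs : s = 0 := by simpa [hz0] using h
    subst hs
    simpa [hz0] using hst
  have hspan : ∀ v ∈ LieModule.lowerCentralSeries F L L 1, ∃ a b : F, v = a • w0 + b • z := by
    have hle : Submodule.span F (Set.range ![w0, z]) ≤
        (LieModule.lowerCentralSeries F L L 1).toSubmodule := by
      rw [Submodule.span_le]
      rintro _ ⟨i, rfl⟩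
      fin_cases i
      · exact hw0
      · exact hz1
    have heq := Submodule.eq_of_le_of_finrank_eq hle (by
      rw [finrank_span_eq_card hli]; exact hder.symm)
    intro v hv
    have hv' : v ∈ Submodule.span F (Set.range ![w0, z]) := by rw [heq]; exact hv
    rw [Matrix.range_cons, Matrix.range_cons, Matrix.range_empty, Set.union_empty,
      Set.singleton_union, Submodule.mem_span_pair] at hv'
    obtain ⟨a, b, h⟩ := hv'
    exact ⟨a, b, h.symm⟩
  obtain ⟨f0, g0, hfw, hfz, hgw, hgz⟩ : ∃ f0 g0 : L →ₗ[F] F,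
      f0 w0 = 1 ∧ f0 z = 0 ∧ g0 w0 = 0 ∧ g0 z = 1 := by
    obtain ⟨T, hT⟩ := LinearMap.exists_leftInverse_of_injective
      (Finsupp.linearCombination F ![w0, z]) (LinearMap.ker_eq_bot.2 hli)
    have h0 : T w0 = Finsupp.single 0 1 := by
      have := LinearMap.congr_fun hT (Finsupp.single 0 1)
      simpa using this
    have h1 : T z = Finsupp.single 1 1 := by
      have := LinearMap.congr_fun hT (Finsupp.single 1 1)
      simpa using this
    exact ⟨Finsupp.lapply 0 ∘ₗ T, Finsupp.lapply 1 ∘ₗ T, by simp [h0], by simp [h1],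
      by simp [h0], by simp [h1]⟩
  have hv0 : ∀ v ∈ LieModule.lowerCentralSeries F L L 1, v = f0 v • w0 + g0 v • z := by
    intro v hv
    obtain ⟨a, b, rfl⟩ := hspan v hv
    simp [hfw, hfz, hgw, hgz]
  let lam : L →ₗ[F] F := -(g0 ∘ₗ (LieAlgebra.ad F L w0 : L →ₗ[F] L))
  have hlam' : ∀ x : L, lam x = g0 ⁅x, w0⁆ := by
    intro x
    simp only [lam, LinearMap.neg_apply, LinearMap.comp_apply, LieAlgebra.ad_apply]
    rw [← lie_skew w0 x, map_neg, neg_neg]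
  have hlam : ∀ x : L, ⁅x, w0⁆ = lam x • z := by
    intro x
    have h := hv0 _ (hmem1 x w0)
    have hb := h3' x1 _ (hmem 1 x w0 hw0)
    rw [h] at hb
    simp only [lie_add, lie_smul, hzc, ← hz, smul_zero, add_zero] at hb
    have : f0 ⁅x, w0⁆ = 0 := by simpa [hz0] using hb
    rw [this, zero_smul, zero_add, ← hlam'] at h
    exact h
  let mu : L →ₗ[F] F := f0 ∘ₗ (LieAlgebra.ad F L x1 : L →ₗ[F] L)
  have hmu : ∀ t : L, mu t = f0 ⁅x1, t⁆ := fun t => rfl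
  have hl1 : lam x1 = 1 := by rw [hlam', ← hz, hgz]
  have hm1 : mu x1 = 0 := by rw [hmu]; simp
  have hJ : ∀ x y t : L, ⁅x, ⁅y, t⁆⁆ = (f0 ⁅y, t⁆ * lam x) • z := by
    intro x y t
    conv_lhs => rw [hv0 _ (hmem1 y t)]
    rw [lie_add, lie_smul, lie_smul, hzc, hlam, smul_zero, add_zero, smul_smul]
  have hf : ∀ y t : L, f0 ⁅y, t⁆ = lam y * mu t - lam t * mu y := by
    intro y t
    have h := lie_jacobi x1 y t
    rw [hJ, hJ, hJ, ← add_smul, ← add_smul] at h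
    have h' := (smul_eq_zero.1 h).resolve_right hz0
    rw [hl1, ← lie_skew t x1, map_neg, ← hmu, ← hmu] at h'
    linear_combination h'
  obtain ⟨y, hy⟩ : ∃ y, mu y ≠ 0 := by
    by_contra! hcon
    have hle : LieModule.lowerCentralSeries F L L 1 ≤
        LieModule.lowerCentralSeries F L L 2 := by
      conv_lhs => rw [LieModule.lowerCentralSeries_succ, LieSubmodule.lieIdeal_oper_eq_span]
      rw [LieSubmodule.lieSpan_le]
      rintro _ ⟨x, m, rfl⟩
      have h := hv0 _ (hmem1 (x : L) (m : L))
      rw [hf, hcon, hcon] at h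
      simp only [mul_zero, sub_zero, zero_smul, zero_add] at h
      change ⁅(x : L), (m : L)⁆ ∈ LieModule.lowerCentralSeries F L L 2
      rw [h]
      exact (LieModule.lowerCentralSeries F L L 2).smul_mem _ hz2
    exact hz0 (hz.trans (h3' x1 w0 (hle hw0)))
  have hlz : lam z = 0 := by rw [hlam', ← lie_skew, hzc]; simp
  have hlw0 : lam w0 = 0 := by rw [hlam']; simp
  have hmz : mu z = 0 := by rw [hmu, hzc]; simp
  have hmw0 : mu w0 = 0 := by rw [hmu, ← hz, hfz]
  obtain ⟨x2, hx2⟩ : ∃ x2, x2 = (mu y)⁻¹ • (y - lam y • x1) := ⟨_, rfl⟩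
  have hl2 : lam x2 = 0 := by simp [hx2, hl1]
  have hm2 : mu x2 = 1 := by simp [hx2, hm1, hy]
  have hw : ⁅x1, x2⁆ = w0 + g0 ⁅x1, x2⁆ • z := by
    conv_lhs => rw [hv0 _ (hmem1 x1 x2)]
    rw [← hmu, hm2, one_smul]
  obtain ⟨c, hc⟩ : ∃ c, c = g0 ⁅x1, x2⁆ := ⟨_, rfl⟩
  rw [← hc] at hw
  refine ⟨x1, x2, w0 + c • z, z, lam, mu, g0 - c • f0, hw, ?_, hzc, ?_, hl1, hm1, hl2, hm2,
    ?_, hlz, ?_, hmz, ?_, ?_⟩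
  · intro x; simp [hzc, hlam]
  · intro x y
    conv_lhs => rw [hv0 _ (hmem1 x y)]
    rw [← hf]
    simp only [LinearMap.sub_apply, LinearMap.smul_apply, smul_eq_mul]
    module
  · simp [hlz, hlw0]
  · simp [hmz, hmw0]
  · simp [hfw, hfz, hgw, hgz]
  · simp [hfz, hgz]

/-- Obstruction to capability. -/
lemma obstruct_aux {E : Type u} [LieRing E] [LieAlgebra F E] (p : E →ₗ⁅F⁆ L)
    (hs : Function.Surjective p) (hp : ∀ e, p e = 0 ↔ ∀ y : E, ⁅y, e⁆ = 0)
    (x1 w k1 k2 z : L) (c : F) (hz : ⁅x1, w⁆ = z)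
    (h1 : ⁅k1, x1⁆ = 0) (h2 : ⁅k2, x1⁆ = 0) (h1w : ⁅k1, w⁆ = 0) (h2w : ⁅k2, w⁆ = 0)
    (hk1 : ∀ y : L, ∃ b : F, ⁅y, k1⁆ = b • z) (hk2 : ∀ y : L, ∃ b : F, ⁅y, k2⁆ = b • z)
    (hk : ⁅k1, k2⁆ = c • z) (hc : c ≠ 0) : z = 0 := by
  obtain ⟨X1, rfl⟩ := hs x1
  obtain ⟨W, rfl⟩ := hs w
  obtain ⟨K1, rfl⟩ := hs k1
  obtain ⟨K2, rfl⟩ := hs k2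
  have hcen : ∀ e, p e = 0 → ∀ y : E, ⁅e, y⁆ = 0 := by
    intro e he y
    rw [← lie_skew, (hp e).1 he y, neg_zero]
  have hA : ∀ K : E, ⁅p K, p X1⁆ = 0 → ⁅p K, p W⁆ = 0 → ⁅K, ⁅X1, W⁆⁆ = 0 := by
    intro K ha hb
    rw [leibniz_lie, hcen ⁅K, X1⁆ (by simpa using ha), (hp ⁅K, W⁆).1 (by simpa using hb), add_zero]
  have hA1 := hA K1 h1 h1w
  have hA2 := hA K2 h2 h2w
  have hA2' : ⁅⁅X1, W⁆, K2⁆ = 0 := by rw [← lie_skew, hA2, neg_zero]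
  have hdiff : p (⁅K1, K2⁆ - c • ⁅X1, W⁆) = 0 := by
    simp [hk, hz]
  have hB : ∀ Y : E, ⁅Y, ⁅K1, K2⁆⁆ = 0 := by
    intro Y
    obtain ⟨b1, hb1⟩ := hk1 (p Y)
    obtain ⟨b2, hb2⟩ := hk2 (p Y)
    have e1 := hcen (⁅Y, K1⁆ - b1 • ⁅X1, W⁆) (by simp [hb1, hz]) K2
    have e2 := (hp (⁅Y, K2⁆ - b2 • ⁅X1, W⁆)).1 (by simp [hb2, hz]) K1
    rw [sub_lie, smul_lie, hA2', smul_zero, sub_zero] at e1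
    rw [lie_sub, lie_smul, hA1, smul_zero, sub_zero] at e2
    rw [leibniz_lie, e1, e2, add_zero]
  have : p ⁅K1, K2⁆ = 0 := (hp _).2 hB
  rw [LieHom.map_lie, hk] at this
  exact (smul_eq_zero.1 this).resolve_left hc

/-- Completing a partial basis with dual functionals. -/
lemma basis_aux [FiniteDimensional F L] (n k : ℕ) (hn : finrank F L = n)
    (v : Fin k → L) (φ : Fin k → L →ₗ[F] F) (h : ∀ i j, φ i (v j) = if i = j then 1 else 0) :
    ∃ (hk : k ≤ n) (b : Basis (Fin n) F L), (∀ i : Fin k, b (Fin.castLE hk i) = v i) ∧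
      ∀ i : Fin n, k ≤ i.1 → ∀ j, φ j (b i) = 0 := by
  classical
  let Φ : L →ₗ[F] (Fin k → F) := LinearMap.pi φ
  let V : (Fin k → F) →ₗ[F] L := Fintype.linearCombination F v
  have hΦV : ∀ a, Φ (V a) = a := by
    intro a
    ext i
    simp [Φ, V, Fintype.linearCombination_apply, h]
  have hP : ∀ x, (LinearMap.id - V ∘ₗ Φ : L →ₗ[F] L) x ∈ LinearMap.ker Φ := by
    intro x; simp [hΦV]
  let e : ((Fin k → F) × LinearMap.ker Φ) ≃ₗ[F] L :=
    LinearEquiv.ofLinearMap (V.coprod (LinearMap.ker Φ).subtype)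
      (Φ.prod ((LinearMap.id - V ∘ₗ Φ : L →ₗ[F] L).codRestrict (LinearMap.ker Φ) hP))
      (by ext x; simp)
      (by
        apply LinearMap.ext
        rintro ⟨a, x, hx⟩
        have hx' : Φ x = 0 := hx
        ext <;> simp [hΦV, hx'])
  have hdim : k + finrank F (LinearMap.ker Φ) = n := by
    rw [← hn, ← e.finrank_eq, Module.finrank_prod]; simp
  let b0 : Basis (Fin k ⊕ Fin (finrank F (LinearMap.ker Φ))) F L :=
    ((Pi.basisFun F (Fin k)).prod (Module.finBasis F (LinearMap.ker Φ))).map e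
  let eq : Fin k ⊕ Fin (finrank F (LinearMap.ker Φ)) ≃ Fin n :=
    finSumFinEquiv.trans (finCongr hdim)
  refine ⟨by omega, b0.reindex eq, ?_, ?_⟩
  · intro i
    have : eq.symm (Fin.castLE (by omega) i) = Sum.inl i := by
      rw [Equiv.symm_apply_eq]; ext; simp [eq]
    rw [Basis.reindex_apply, this]
    simp [b0, e, V]
  · intro i hi j
    have : eq.symm i = Sum.inr ⟨i - k, by omega⟩ := by
      rw [Equiv.symm_apply_eq]; ext; simp [eq]; omega
    rw [Basis.reindex_apply, this]
    have h2 : Φ (b0 (Sum.inr ⟨i - k, by omega⟩)) = 0 := by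
      simp [b0, e]
    exact congrFun h2 j

end Helpers

section Ext

variable {F L : Type u} [Field F] [LieRing L] [LieAlgebra F L]

lemma witness_of_hom {E : Type u} [LieRing E] [LieAlgebra F E] (p : E →ₗ⁅F⁆ L)
    (hs : Function.Surjective p) (hp : p.ker = LieAlgebra.center F E) : IsCapable F L := by
  have e : Nonempty (L ≃ₗ⁅F⁆ (E ⧸ LieAlgebra.center F E)) := by
    rw [← hp]
    have hr : p.range = ⊤ := p.range_eq_top.2 hs
    have e1 := p.quotKerEquivRange
    rw [hr] at e1
    exact ⟨(e1.trans LieSubalgebra.topEquiv).symm⟩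
  obtain ⟨e⟩ := e
  exact ⟨⟨E, e⟩⟩

lemma hom_of_capable (h : IsCapable F L) : ∃ (E : Type u) (_ : LieRing E) (_ : LieAlgebra F E)
    (p : E →ₗ⁅F⁆ L), Function.Surjective p ∧ ∀ e, p e = 0 ↔ ∀ y : E, ⁅y, e⁆ = 0 := by
  obtain ⟨⟨E, e⟩⟩ := h
  let p : E →ₗ⁅F⁆ L :=
    { toFun := fun x => e.symm (LieSubmodule.Quotient.mk x)
      map_add' := fun x y => map_add e.symm (LieSubmodule.Quotient.mk x) (LieSubmodule.Quotient.mk y)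
      map_smul' := fun c x => map_smul e.symm c (LieSubmodule.Quotient.mk x)
      map_lie' := fun {x y} => by
        rw [LieSubmodule.Quotient.mk_bracket, LieEquiv.map_lie] }
  have hp : ∀ x, p x = e.symm (LieSubmodule.Quotient.mk x) := fun _ => rfl
  refine ⟨E, inferInstance, inferInstance, p, ?_, ?_⟩
  · intro x
    obtain ⟨y, hy⟩ := LieSubmodule.Quotient.surjective_mk' (LieAlgebra.center F E) (e x)
    refine ⟨y, ?_⟩
    rw [hp, LieEquiv.symm_apply_eq]
    exact hy
  · intro x
    rw [← LieModule.mem_maxTrivSubmodule (R := F), hp, ← LieSubmodule.Quotient.mk_eq_zero]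
    exact map_eq_zero_iff e.symm e.symm.injective

/-- Underlying space of a central extension. -/
def CExt (L : Type u) : Type u := L × L

instance : AddCommGroup (CExt L) := inferInstanceAs (AddCommGroup (L × L))
instance : Module F (CExt L) := inferInstanceAs (Module F (L × L))

/-- Bracket twisted by a cocycle. -/
@[reducible] def cextLieRing (om : L →ₗ[F] L →ₗ[F] L) (h0 : ∀ x, om x x = 0)
    (hJ : ∀ x y t : L, om x ⁅y, t⁆ = om ⁅x, y⁆ t + om y ⁅x, t⁆) : LieRing (CExt L) where
  bracket x y := (⁅x.1, y.1⁆, om x.1 y.1)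
  add_lie x y t := Prod.ext (add_lie x.1 y.1 t.1) (om.map_add₂ x.1 y.1 t.1)
  lie_add x y t := Prod.ext (lie_add x.1 y.1 t.1) ((om x.1).map_add y.1 t.1)
  lie_self x := Prod.ext (lie_self x.1) (h0 x.1)
  leibniz_lie x y t := Prod.ext (leibniz_lie x.1 y.1 t.1) (hJ x.1 y.1 t.1)

lemma capable_of_cocycle (om : L →ₗ[F] L →ₗ[F] L) (h0 : ∀ x, om x x = 0)
    (hJ : ∀ x y t : L, om x ⁅y, t⁆ = om ⁅x, y⁆ t + om y ⁅x, t⁆)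
    (hZ : ∀ x : L, (∀ y : L, ⁅y, x⁆ = 0) → (∀ y, om y x = 0) → x = 0) : IsCapable F L := by
  let _ : LieRing (CExt L) := cextLieRing om h0 hJ
  have hbr : ∀ x y : CExt L, ⁅x, y⁆ = ((⁅x.1, y.1⁆, om x.1 y.1) : L × L) := fun _ _ => rfl
  let _ : LieAlgebra F (CExt L) :=
    { lie_smul := by
        intro c x y
        apply Prod.ext
        · exact lie_smul c x.1 y.1
        · exact (om x.1).map_smul c y.1 }
  let p : CExt L →ₗ⁅F⁆ L :=
    { toFun := fun x => x.1
      map_add' := fun _ _ => rfl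
      map_smul' := fun _ _ => rfl
      map_lie' := rfl }
  refine witness_of_hom p (fun x => ⟨(x, 0), rfl⟩) ?_
  ext e
  rw [LieHom.mem_ker, LieModule.mem_maxTrivSubmodule]
  constructor
  · intro he y
    have he' : e.1 = 0 := he
    rw [hbr, he']
    simp
    rfl
  · intro h
    apply hZ
    · intro y
      exact congrArg Prod.fst (h (y, 0))
    · intro y
      exact congrArg Prod.snd (h (y, 0))

lemma capable_of_form (x1 x2 w z : L) (lam mu nu be : L →ₗ[F] F)
    (hbr : ∀ x y : L, ⁅x, y⁆ = (lam x * mu y - lam y * mu x) • w +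
      (lam x * nu y - lam y * nu x + (mu x * be y - mu y * be x)) • z)
    (hz : z ≠ 0) (l1 : lam x1 = 1) (n1 : nu x1 = 0) (b1 : be x1 = 0)
    (l2 : lam x2 = 0) (m2 : mu x2 = 1) (n2 : nu x2 = 0) (b2 : be x2 = 0)
    (lw : lam w = 0) (mw : mu w = 0) (nw : nu w = 1) (bw : be w = 0)
    (lz : lam z = 0) (nz : nu z = 0) (bz : be z = 0) : IsCapable F L := by
  let om : L →ₗ[F] L →ₗ[F] L := LinearMap.mk₂ F
    (fun x y => lam x • y - lam y • x + (nu x * be y - nu y * be x) • z)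
    (by intros; simp only [map_add]; module)
    (by intros; simp only [map_smul, smul_eq_mul]; module)
    (by intros; simp only [map_add]; module)
    (by intros; simp only [map_smul, smul_eq_mul]; module)
  have hom : ∀ x y, om x y = lam x • y - lam y • x + (nu x * be y - nu y * be x) • z :=
    fun _ _ => rfl
  refine capable_of_cocycle om ?_ ?_ ?_
  · intro x; rw [hom]; module
  · intro x y t
    simp only [hom]
    simp only [hbr, map_add, map_smul, lw, nw, bw, lz, nz, bz, smul_eq_mul]
    module
  · intro x hx hox
    have h1 := hx x1
    have h2 := hx x2
    have hw := hx w
    have hx1 := hox x1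
    rw [hbr, lw, mw, nw, bw] at hw
    have lx : lam x = 0 := by
      simpa [hz] using hw
    rw [hbr, l2, m2, n2, b2, lx] at h2
    have bx : be x = 0 := by simpa [hz] using h2
    rw [hom, l1, n1, b1, lx, bx] at hx1
    simpa using hx1

lemma form_of_basis {n : ℕ} (b : Basis (Fin n) F L) (B : L →ₗ[F] L →ₗ[F] L)
    (h0 : ∀ x, B x x = 0) (h : ∀ i j, i < j → B (b i) (b j) = ⁅b i, b j⁆) :
    ∀ x y, ⁅x, y⁆ = B x y := by
  have hsk : ∀ x y, B y x = - B x y := by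
    intro x y
    have := h0 (x + y)
    simp only [map_add, LinearMap.add_apply, h0, zero_add, add_zero] at this
    exact eq_neg_of_add_eq_zero_left this
  have : (LieAlgebra.ad F L : L →ₗ[F] L →ₗ[F] L) = B := by
    refine b.ext fun i => b.ext fun j => ?_
    simp only [LieHom.coe_toLinearMap, LieAlgebra.ad_apply]
    rcases lt_trichotomy i j with hij | hij | hij
    · exact (h i j hij).symm
    · subst hij; simp [h0]
    · rw [hsk, h j i hij, lie_skew]
  intro x y
  rw [← this]; rfl

/-- The bilinear form attached to four functionals and two vectors. -/
def formB (lam mu nu be : L →ₗ[F] F) (w z : L) : L →ₗ[F] L →ₗ[F] L := LinearMap.mk₂ F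
    (fun x y => (lam x * mu y - lam y * mu x) • w +
      (lam x * nu y - lam y * nu x + (mu x * be y - mu y * be x)) • z)
    (by intros; simp only [map_add]; module)
    (by intros; simp only [map_smul, smul_eq_mul]; module)
    (by intros; simp only [map_add]; module)
    (by intros; simp only [map_smul, smul_eq_mul]; module)

lemma formB_apply (lam mu nu be : L →ₗ[F] F) (w z x y : L) : formB lam mu nu be w z x y =
    (lam x * mu y - lam y * mu x) • w +
      (lam x * nu y - lam y * nu x + (mu x * be y - mu y * be x)) • z := rfl

lemma coord_basis {n : ℕ} (b : Basis (Fin n) F L) (i j : Fin n) :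
    b.coord i (b j) = if j.1 = i.1 then 1 else 0 := by
  simp [Basis.coord_apply, Finsupp.single_apply, Fin.ext_iff]

lemma capable_43 {n : ℕ} (h : IsL43SumAbelian F L n) : IsCapable F L := by
  obtain ⟨hn, b, h01, h02, h⟩ := h
  have hB := form_of_basis b (formB (b.coord ⟨0, by omega⟩) (b.coord ⟨1, by omega⟩)
    (b.coord ⟨2, by omega⟩) 0 (b ⟨2, by omega⟩) (b ⟨3, by omega⟩))
    (by intro x; rw [formB_apply]; module) (by
      rintro ⟨i, hi⟩ ⟨j, hj⟩ hij
      have hij' : i < j := hij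
      rw [formB_apply]
      simp only [coord_basis, LinearMap.zero_apply]
      by_cases c1 : i = 0 ∧ j = 1
      · obtain ⟨rfl, rfl⟩ := c1; rw [h01]; simp
      by_cases c2 : i = 0 ∧ j = 2
      · obtain ⟨rfl, rfl⟩ := c2; rw [h02]; simp
      rw [h _ _ hij (by simpa using c1) (by simpa using c2)]
      have j0 : j ≠ 0 := by omega
      by_cases i0 : i = 0
      · have j1 : j ≠ 1 := by omega
        have j2 : j ≠ 2 := by omega
        simp [j0, j1, j2]
      · simp [i0, j0])
  refine capable_of_form (b ⟨0, by omega⟩) (b ⟨1, by omega⟩) _ _ _ _ _ _ (fun x y => (hB x y).trans (formB_apply ..))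
    (b.ne_zero _) ?_ ?_ ?_ ?_ ?_ ?_ ?_ ?_ ?_ ?_
      ?_ ?_ ?_ ?_ <;> simp [coord_basis, -Basis.coord_apply]

lemma capable_55 {n : ℕ} (h : IsL55SumAbelian F L n) : IsCapable F L := by
  obtain ⟨hn, b, h01, h02, h13, h⟩ := h
  have hB := form_of_basis b (formB (b.coord ⟨0, by omega⟩) (b.coord ⟨1, by omega⟩)
    (b.coord ⟨2, by omega⟩) (b.coord ⟨3, by omega⟩) (b ⟨2, by omega⟩) (b ⟨4, by omega⟩))
    (by intro x; rw [formB_apply]; module) (by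
      rintro ⟨i, hi⟩ ⟨j, hj⟩ hij
      have hij' : i < j := hij
      rw [formB_apply]
      simp only [coord_basis]
      by_cases c1 : i = 0 ∧ j = 1
      · obtain ⟨rfl, rfl⟩ := c1; rw [h01]; simp
      by_cases c2 : i = 0 ∧ j = 2
      · obtain ⟨rfl, rfl⟩ := c2; rw [h02]; simp
      by_cases c3 : i = 1 ∧ j = 3
      · obtain ⟨rfl, rfl⟩ := c3; rw [h13]; simp
      rw [h _ _ hij (by simpa using c1) (by simpa using c2) (by simpa using c3)]
      have j0 : j ≠ 0 := by omega
      by_cases i0 : i = 0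
      · have j1 : j ≠ 1 := by omega
        have j2 : j ≠ 2 := by omega
        have i1 : i ≠ 1 := by omega
        simp [j0, j1, j2, i1]
      by_cases i1 : i = 1
      · have j1 : j ≠ 1 := by omega
        have j3 : j ≠ 3 := by omega
        simp [i0, j0, j1, j3]
      · have j1 : j ≠ 1 := by omega
        simp [i0, j0, i1, j1])
  refine capable_of_form (b ⟨0, by omega⟩) (b ⟨1, by omega⟩) _ _ _ _ _ _ (fun x y => (hB x y).trans (formB_apply ..))
    (b.ne_zero _) ?_ ?_ ?_ ?_ ?_ ?_ ?_ ?_ ?_ ?_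
      ?_ ?_ ?_ ?_ <;> simp [coord_basis, -Basis.coord_apply]

end Ext

/-- An `n`-dimensional Lie algebra of class 3 with 2-dimensional derived subalgebra is
capable iff it is isomorphic to `L_{4,3} ⊕ A(n-4)` or `L_{5,5} ⊕ A(n-5)`. -/
theorem class_three_capable_iff_iso
    (F L : Type u) [Field F] [LieRing L] [LieAlgebra F L] [FiniteDimensional F L]
    (n : ℕ) (hdim : finrank F L = n)
    (hclass : LieModule.lowerCentralSeries F L L 2 ≠ ⊥ ∧ LieModule.lowerCentralSeries F L L 3 = ⊥)
    (hder : finrank F ↥(LieModule.lowerCentralSeries F L L 1) = 2) :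
    IsCapable F L ↔ IsL43SumAbelian F L n ∨ IsL55SumAbelian F L n := by
  constructor
  swap
  · rintro (h | h)
    · exact capable_43 h
    · exact capable_55 h
  intro hcap
  obtain ⟨E, _, _, p, hs, hp⟩ := hom_of_capable hcap
  obtain ⟨x1, x2, w, z, lam, mu, g, hx12, hw, hz, hbr, l1, m1, l2, m2, lw, lz, mw, mz, gw, gz⟩ :=
    struct_aux hclass.1 hclass.2 hder
  have hz0 : z ≠ 0 := by
    rintro rfl
    simp at gz
  have hw1 : ⁅x1, w⁆ = z := by rw [hw, l1, one_smul]
  have hw2 : ⁅x2, w⁆ = 0 := by rw [hw, l2, zero_smul]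
  let nu : L →ₗ[F] F := g ∘ₗ (LieAlgebra.ad F L x1 : L →ₗ[F] L)
  let be : L →ₗ[F] F := g ∘ₗ (LieAlgebra.ad F L x2 : L →ₗ[F] L)
  have hnu : ∀ x : L, nu x = g ⁅x1, x⁆ := fun _ => rfl
  have hbe : ∀ x : L, be x = g ⁅x2, x⁆ := fun _ => rfl
  let ze : L →ₗ[F] F := g - g x1 • lam - g x2 • mu
  have hze : ∀ x : L, ze x = g x - g x1 * lam x - g x2 * mu x := fun _ => rfl
  have n1 : nu x1 = 0 := by simp [hnu]
  have n2 : nu x2 = 0 := by simp [hnu, hx12, gw]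
  have nw : nu w = 1 := by simp [hnu, hw1, gz]
  have nz : nu z = 0 := by simp [hnu, hz]
  have b1 : be x1 = 0 := by rw [hbe, ← lie_skew, hx12, map_neg, gw, neg_zero]
  have b2 : be x2 = 0 := by simp [hbe]
  have bw : be w = 0 := by simp [hbe, hw2]
  have bz : be z = 0 := by simp [hbe, hz]
  have z1 : ze x1 = 0 := by simp [hze, l1, m1]
  have z2 : ze x2 = 0 := by simp [hze, l2, m2]
  have zw : ze w = 0 := by simp [hze, lw, mw, gw]
  have zz : ze z = 1 := by simp [hze, lz, mz, gz]
  have e1 : ∀ k, lam k = 0 → mu k = 0 → nu k = 0 → ⁅x1, k⁆ = 0 := by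
    intro k hl hm hn
    rw [hbr, ← hnu, hn, hl, hm]; simp
  have e2 : ∀ k, lam k = 0 → mu k = 0 → ⁅x2, k⁆ = be k • z := by
    intro k hl hm
    rw [hbr, ← hbe, hl, hm]; simp
  have ew : ∀ k, lam k = 0 → ⁅w, k⁆ = 0 := by
    intro k hl
    rw [← lie_skew, hw, hl]; simp
  have ez : ∀ k : L, ⁅z, k⁆ = 0 := by
    intro k
    rw [← lie_skew, hz]; simp
  have hk : ∀ k1 k2, lam k1 = 0 → mu k1 = 0 → nu k1 = 0 → lam k2 = 0 → mu k2 = 0 → nu k2 = 0 →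
      ⁅k1, k2⁆ = 0 := by
    intro k1 k2 a1 a2 a3 c1 c2 c3
    have h12 : ⁅k1, k2⁆ = g ⁅k1, k2⁆ • z := by
      conv_lhs => rw [hbr]
      rw [a1, c1]; simp
    by_contra hne
    refine hz0 (obstruct_aux p hs hp x1 w k1 k2 z (g ⁅k1, k2⁆) hw1 ?_ ?_ ?_ ?_ ?_ ?_ h12 ?_)
    · rw [← lie_skew, e1 k1 a1 a2 a3, neg_zero]
    · rw [← lie_skew, e1 k2 c1 c2 c3, neg_zero]
    · rw [hw, a1, zero_smul]
    · rw [hw, c1, zero_smul]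
    · intro y
      refine ⟨g ⁅y, k1⁆, ?_⟩
      conv_lhs => rw [hbr]
      rw [a1, a2]; simp
    · intro y
      refine ⟨g ⁅y, k2⁆, ?_⟩
      conv_lhs => rw [hbr]
      rw [c1, c2]; simp
    · intro h0
      rw [h0, zero_smul] at h12
      exact hne h12
  by_cases hb : ∀ k, lam k = 0 → mu k = 0 → nu k = 0 → ze k = 0 → be k = 0
  · left
    obtain ⟨hn, b, hbv, hbk⟩ := basis_aux n 4 hdim ![x1, x2, w, z] ![lam, mu, nu, ze] (by
      intro i j
      fin_cases i <;> fin_cases j <;> simp [l1, m1, l2, m2, lw, lz, mw, mz, n1, n2, nw, nz, z1, z2, zw, zz])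
    have v0 : b ⟨0, by omega⟩ = x1 := hbv 0
    have v1 : b ⟨1, by omega⟩ = x2 := hbv 1
    have v2 : b ⟨2, by omega⟩ = w := hbv 2
    have v3 : b ⟨3, by omega⟩ = z := hbv 3
    have r0 : ∀ i : Fin n, 4 ≤ i.1 → lam (b i) = 0 := fun i hi => hbk i hi 0
    have r1 : ∀ i : Fin n, 4 ≤ i.1 → mu (b i) = 0 := fun i hi => hbk i hi 1
    have r2 : ∀ i : Fin n, 4 ≤ i.1 → nu (b i) = 0 := fun i hi => hbk i hi 2
    have r3 : ∀ i : Fin n, 4 ≤ i.1 → ze (b i) = 0 := fun i hi => hbk i hi 3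
    refine ⟨hn, b, by rw [v0, v1, v2, hx12], by rw [v0, v2, v3, hw1], ?_⟩
    rintro ⟨i, hi⟩ ⟨j, hj⟩ hij c1 c2
    have hij' : i < j := hij
    simp only [ne_eq, Prod.mk.injEq, Fin.mk.injEq, not_and] at c1 c2
    by_cases j3 : j = 3
    · subst j3; rw [v3, hz]
    by_cases j4 : 4 ≤ j
    · have s0 := r0 ⟨j, hj⟩ j4
      have s1 := r1 ⟨j, hj⟩ j4
      have s2 := r2 ⟨j, hj⟩ j4
      have s3 := r3 ⟨j, hj⟩ j4
      by_cases i4 : 4 ≤ i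
      · exact hk _ _ (r0 _ i4) (r1 _ i4) (r2 _ i4) s0 s1 s2
      have : i = 0 ∨ i = 1 ∨ i = 2 ∨ i = 3 := by omega
      rcases this with rfl | rfl | rfl | rfl
      · rw [v0, e1 _ s0 s1 s2]
      · rw [v1, e2 _ s0 s1, hb _ s0 s1 s2 s3, zero_smul]
      · rw [v2, ew _ s0]
      · rw [v3, ez]
    · have : i = 1 ∧ j = 2 := by omega
      obtain ⟨rfl, rfl⟩ := this
      rw [v1, v2, hw2]
  · right
    push Not at hb
    obtain ⟨k', kl', km', kn', kz', kb'⟩ := hb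
    obtain ⟨k, hk'⟩ : ∃ k, k = (be k')⁻¹ • k' := ⟨_, rfl⟩
    have kl : lam k = 0 := by rw [hk', map_smul, kl', smul_zero]
    have km : mu k = 0 := by rw [hk', map_smul, km', smul_zero]
    have kn : nu k = 0 := by rw [hk', map_smul, kn', smul_zero]
    have kz : ze k = 0 := by rw [hk', map_smul, kz', smul_zero]
    have kb : be k = 1 := by rw [hk', map_smul, smul_eq_mul, inv_mul_cancel₀ kb']
    obtain ⟨hn, b, hbv, hbk⟩ := basis_aux n 5 hdim ![x1, x2, w, k, z] ![lam, mu, nu, be, ze] (by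
      intro i j
      fin_cases i <;> fin_cases j <;> simp [l1, m1, l2, m2, lw, lz, mw, mz, n1, n2, nw, nz, z1, z2, zw, zz,
        b1, b2, bw, bz, kl, km, kn, kz, kb])
    have v0 : b ⟨0, by omega⟩ = x1 := hbv 0
    have v1 : b ⟨1, by omega⟩ = x2 := hbv 1
    have v2 : b ⟨2, by omega⟩ = w := hbv 2
    have v3 : b ⟨3, by omega⟩ = k := hbv 3
    have v4 : b ⟨4, by omega⟩ = z := hbv 4
    have r0 : ∀ i : Fin n, 5 ≤ i.1 → lam (b i) = 0 := fun i hi => hbk i hi 0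
    have r1 : ∀ i : Fin n, 5 ≤ i.1 → mu (b i) = 0 := fun i hi => hbk i hi 1
    have r2 : ∀ i : Fin n, 5 ≤ i.1 → nu (b i) = 0 := fun i hi => hbk i hi 2
    have r3 : ∀ i : Fin n, 5 ≤ i.1 → be (b i) = 0 := fun i hi => hbk i hi 3
    refine ⟨hn, b, by rw [v0, v1, v2, hx12], by rw [v0, v2, v4, hw1], ?_, ?_⟩
    · rw [v1, v3, v4, e2 k kl km, kb, one_smul]
    rintro ⟨i, hi⟩ ⟨j, hj⟩ hij c1 c2 c3
    have hij' : i < j := hij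
    simp only [ne_eq, Prod.mk.injEq, Fin.mk.injEq, not_and] at c1 c2 c3
    by_cases j4 : j = 4
    · subst j4; rw [v4, hz]
    by_cases j5 : 5 ≤ j
    · have s0 := r0 ⟨j, hj⟩ j5
      have s1 := r1 ⟨j, hj⟩ j5
      have s2 := r2 ⟨j, hj⟩ j5
      have s3 := r3 ⟨j, hj⟩ j5
      by_cases i5 : 5 ≤ i
      · exact hk _ _ (r0 _ i5) (r1 _ i5) (r2 _ i5) s0 s1 s2
      have : i = 0 ∨ i = 1 ∨ i = 2 ∨ i = 3 ∨ i = 4 := by omega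
      rcases this with rfl | rfl | rfl | rfl | rfl
      · rw [v0, e1 _ s0 s1 s2]
      · rw [v1, e2 _ s0 s1, s3, zero_smul]
      · rw [v2, ew _ s0]
      · rw [v3]; exact hk _ _ kl km kn s0 s1 s2
      · rw [v4, ez]
    · have : (i = 1 ∧ j = 2) ∨ (i = 0 ∧ j = 3) ∨ (i = 2 ∧ j = 3) := by omega
      rcases this with ⟨rfl, rfl⟩ | ⟨rfl, rfl⟩ | ⟨rfl, rfl⟩
      · rw [v1, v2, hw2]
      · rw [v0, v3, e1 _ kl km kn]
      · rw [v2, v3, ew _ kl]
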